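/- Suppose there exists a non-empty open proper subset U of 𝕊¹ such that U is forward-invariant under the invertible RDS φ and there does not exist any non-empty closed forward-invariant set K⊆𝕊¹∖U. Then φ is stably synchronising if and only if for all x,y∈U, ℙ(ω : d(φ(t,ω)x,φ(t,ω)y)→0 as t→∞)=1. -/

import Mathlib

open MeasureTheory Filter Topology Set ENNReal

noncomputable section

/-- The natural projection `π : ℝ → 𝕊¹ = ℝ/ℤ`. -/
def circleProj (x : ℝ) : UnitAddCircle := (x : UnitAddCircle)

/-- `f` is an orientation-preserving homeomorphism of the circle: it admits a strictly
monotone degree-one lift. -/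
def OrientPreserving (f : UnitAddCircle ≃ₜ UnitAddCircle) : Prop :=
  ∃ F : ℝ → ℝ, StrictMono F ∧ (∀ x : ℝ, F (x + 1) = F x + 1) ∧
    ∀ x : ℝ, f (circleProj x) = circleProj (F x)

/-- The anticlockwise distance `d₊(x,y) = min {r ≥ 0 : π(x' + r) = y}` (`x'` any lift of `x`). -/
def dPlus (x y : UnitAddCircle) : ℝ :=
  sInf {r : ℝ | 0 ≤ r ∧ ∃ x' : ℝ, circleProj x' = x ∧ circleProj (x' + r) = y}

/-- An invertible random dynamical system on the circle, in discrete or continuous time,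
driven by a stationary memoryless noise process. -/
structure RDS (Ω : Type) [m : MeasurableSpace Ω] where
  /-- the time set `𝕋⁺`: either `ℕ ∪ {0}` or `[0,∞)`, viewed inside `ℝ` -/
  T : Set ℝ
  T_cases : T = Set.range (fun n : ℕ => (n : ℝ)) ∨ T = Set.Ici (0 : ℝ)
  /-- the filtration -/
  F : ℝ → MeasurableSpace Ω
  F_le : ∀ t ∈ T, F t ≤ m
  F_mono : ∀ s ∈ T, ∀ t ∈ T, s ≤ t → F s ≤ F t
  /-- the probability measure -/
  P : Measure Ω
  P_prob : IsProbabilityMeasure P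
  /-- the time-shift maps on the noise space -/
  θ : ℝ → Ω → Ω
  θ_zero : θ 0 = id
  θ_add : ∀ s ∈ T, ∀ t ∈ T, θ (s + t) = θ t ∘ θ s
  θ_preserving : ∀ t ∈ T, MeasurePreserving (θ t) P P
  θ_adapted : ∀ s ∈ T, ∀ t ∈ T, @Measurable Ω Ω (F (s + t)) (F s) (θ t)
  θ_indep : ∀ t ∈ T, ∀ E A : Set Ω, MeasurableSet[F t] E →
    MeasurableSet[⨆ s ∈ T, F s] A → P (E ∩ θ t ⁻¹' A) = P E * P A
  /-- the random homeomorphisms -/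
  φ : ℝ → Ω → UnitAddCircle ≃ₜ UnitAddCircle
  φ_orient : ∀ t ∈ T, ∀ ω, OrientPreserving (φ t ω)
  φ_meas : ∀ t ∈ T, @Measurable (Ω × UnitAddCircle) UnitAddCircle
    ((F t).prod inferInstance) inferInstance (fun p => φ t p.1 p.2)
  φ_zero : ∀ ω, φ 0 ω = Homeomorph.refl UnitAddCircle
  φ_cocycle : ∀ s ∈ T, ∀ t ∈ T, ∀ ω x, φ (s + t) ω x = φ t (θ s ω) (φ s ω x)
  φ_cadlag_right : ∀ ω, ∀ t ∈ T, ∀ tn : ℕ → ℝ, (∀ n, tn n ∈ T) → Antitone tn →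
    Tendsto tn atTop (𝓝 t) → ∀ (xn : ℕ → UnitAddCircle) (x : UnitAddCircle),
      Tendsto xn atTop (𝓝 x) →
      Tendsto (fun n => φ (tn n) ω (xn n)) atTop (𝓝 (φ t ω x))
  /-- the left-limit maps -/
  φ_left_lim : ℝ → Ω → UnitAddCircle → UnitAddCircle
  φ_cadlag_left : ∀ ω, ∀ t ∈ T, ∀ tn : ℕ → ℝ, (∀ n, tn n ∈ T) → StrictMono tn →
    Tendsto tn atTop (𝓝 t) → ∀ (xn : ℕ → UnitAddCircle) (x : UnitAddCircle),
      Tendsto xn atTop (𝓝 x) →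
      Tendsto (fun n => φ (tn n) ω (xn n)) atTop (𝓝 (φ_left_lim t ω x))

/-- A probability measure on the circle is atomless if every singleton is null. -/
def Atomless (ρ : Measure UnitAddCircle) : Prop := ∀ x, ρ {x} = 0

/-- A measure on the circle has full support. -/
def FullSupport (ρ : Measure UnitAddCircle) : Prop :=
  ∀ U : Set UnitAddCircle, IsOpen U → U.Nonempty → 0 < ρ U

/-- The (topological) support of a measure on the circle. -/
def msupport (ρ : Measure UnitAddCircle) : Set UnitAddCircle :=
  {x | ∀ U : Set UnitAddCircle, IsOpen U → x ∈ U → 0 < ρ U}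

namespace RDS

variable {Ω : Type} [m : MeasurableSpace Ω] (S : RDS Ω)

/-- the future σ-algebra `𝓕₊ = σ(𝓕_t : t ∈ 𝕋⁺)`. -/
def Fplus : MeasurableSpace Ω := ⨆ t ∈ S.T, S.F t

/-- The filter "t → ∞ along the time set 𝕋⁺". -/
def tFilter : Filter ℝ := atTop ⊓ 𝓟 S.T

/-- two-point contractibility. -/
def Contractible : Prop := ∀ x y : UnitAddCircle, x ≠ y →
  0 < S.P {ω | ∃ t ∈ S.T, dist (S.φ t ω x) (S.φ t ω y) < dist x y}

/-- compressibility. -/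
def Compressible : Prop := ∀ x y : UnitAddCircle, x ≠ y →
  0 < S.P {ω | ∃ t ∈ S.T, dPlus (S.φ t ω x) (S.φ t ω y) < dPlus x y}

/-- `p` is a deterministic fixed point. -/
def DetFixedPoint (p : UnitAddCircle) : Prop :=
  ∀ᵐ ω ∂S.P, ∀ t ∈ S.T, S.φ t ω p = p

/-- `A` is forward-invariant. -/
def ForwardInvariant (A : Set UnitAddCircle) : Prop :=
  ∀ᵐ ω ∂S.P, ∀ t ∈ S.T, ⇑(S.φ t ω) '' A ⊆ A

/-- reverse-minimal dynamics: the only open forward-invariant sets are `∅` and `𝕊¹`. -/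
def ReverseMinimal : Prop :=
  ∀ A : Set UnitAddCircle, IsOpen A → S.ForwardInvariant A → A = ∅ ∨ A = Set.univ

/-- synchronisation. -/
def Synchronising : Prop := ∀ x y : UnitAddCircle,
  S.P {ω | Tendsto (fun t => dist (S.φ t ω x) (S.φ t ω y)) S.tFilter (𝓝 0)} = 1

/-- everywhere local stability. -/
def EverywhereLocallyStable : Prop := ∀ x : UnitAddCircle,
  S.P {ω | ∃ U : Set UnitAddCircle, IsOpen U ∧ x ∈ U ∧
    Tendsto (fun t => volume (⇑(S.φ t ω) '' U)) S.tFilter (𝓝 0)} = 1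

/-- stable synchronisation. -/
def StablySynchronising : Prop := S.Synchronising ∧ S.EverywhereLocallyStable

/-- `ρ` is reverse-stationary: `ρ(A) = ∫ ρ(φ(t,ω)A) ℙ(dω)` for all `t ∈ 𝕋⁺`, Borel `A`. -/
def ReverseStationary (ρ : Measure UnitAddCircle) : Prop :=
  ∀ t ∈ S.T, ∀ A : Set UnitAddCircle, MeasurableSet A →
    ρ A = ∫⁻ ω, ρ (⇑(S.φ t ω) '' A) ∂S.P

/-- `r` is a crack point of `ω`. -/
def CrackPoint (ω : Ω) (r : UnitAddCircle) : Prop :=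
  ∀ G : Set UnitAddCircle, IsClosed G → r ∉ G →
    Tendsto (fun t => volume (⇑(S.φ t ω) '' G)) S.tFilter (𝓝 0)

/-- the set of contractive sample points. -/
def Ωc : Set Ω := {ω | ∃ r, S.CrackPoint ω r}

/-- the reverse transition probabilities `φ̄ₓᵗ(A) = ℙ(ω : φ(t,ω)⁻¹(x) ∈ A)`. -/
def revTrans (t : ℝ) (x : UnitAddCircle) (A : Set UnitAddCircle) : ℝ≥0∞ :=
  S.P {ω | (S.φ t ω).symm x ∈ A}

/-- the forward transition probabilities `φₓᵗ(A) = ℙ(ω : φ(t,ω)x ∈ A)`. -/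
def fwdTrans (t : ℝ) (x : UnitAddCircle) (A : Set UnitAddCircle) : ℝ≥0∞ :=
  S.P {ω | S.φ t ω x ∈ A}

/-- `ρ` is stationary for a transition family `ν`. -/
def StationaryFor (ν : ℝ → UnitAddCircle → Set UnitAddCircle → ℝ≥0∞)
    (ρ : Measure UnitAddCircle) : Prop :=
  ∀ t ∈ S.T, ∀ A : Set UnitAddCircle, MeasurableSet A → ρ A = ∫⁻ x, ν t x A ∂ρ

/-- `ρ` is ergodic for a transition family `ν`. -/
def ErgodicFor (ν : ℝ → UnitAddCircle → Set UnitAddCircle → ℝ≥0∞)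
    (ρ : Measure UnitAddCircle) : Prop :=
  S.StationaryFor ν ρ ∧ ∀ A : Set UnitAddCircle, MeasurableSet A →
    (∀ t ∈ S.T, ∀ᵐ x ∂ρ, x ∈ A → ν t x A = 1) → ρ A = 0 ∨ ρ A = 1

end RDS

/-!
Within a forward-invariant open set `U` whose complement contains two points `p ≠ q`,
synchronisation of pairs upgrades to contraction of open sets: an arc in `U` has image missing `p`
and `q`, so once the images of its endpoints are closer than `d(p, q)` the image must be the short
way round between them. Covering `U` by arcs with rational endpoints makes this hold simultaneously
for all points of `U`, almost surely.

The set of points that almost surely never enter `U` is closed and forward-invariant, hence empty.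
By lower semicontinuity and compactness, the probability of being in `U` at a suitable time is then
bounded below uniformly in the starting point, so by the Markov property every point almost surely
enters `U`. After both of two given points have entered, contraction within `U` applies to the
shifted noise.

Finally, the complement of `U` does contain two points: if it were finite, then
`Uᶜ ⊆ φ(t, ω) Uᶜ` would be an equality by counting, and `Uᶜ` would be closed and forward-invariant.
-/

section Arcs

variable {p : ℝ}

lemma dist_coe_addCircle_le (a b : ℝ) : dist (a : AddCircle p) b ≤ |a - b| := by
  rw [dist_eq_norm, ← AddCircle.coe_sub, ← Real.norm_eq_abs]
  exact QuotientAddGroup.norm_mk_le_norm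

variable [hp : Fact (0 < p)]

lemma dist_coe_addCircle_of_abs_sub_le {a b : ℝ} (h : |a - b| ≤ p / 2) :
    dist (a : AddCircle p) b = |a - b| := by
  rw [dist_eq_norm, ← AddCircle.coe_sub, AddCircle.norm_coe_eq_abs_iff p hp.out.ne',
    abs_of_pos hp.out]
  exact h

lemma exists_mem_Ioo_coe_eq_of_notMem {a b : ℝ} {x : AddCircle p}
    (hx : x ∉ ((↑) : ℝ → AddCircle p) '' Icc a b) : ∃ r ∈ Ioo b (a + p), (r : AddCircle p) = x := by
  obtain ⟨r, hr, rfl⟩ : x ∈ ((↑) : ℝ → AddCircle p) '' Ico a (a + p) := by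
    rw [AddCircle.coe_image_Ico_eq]; trivial
  exact ⟨r, ⟨not_le.1 fun hrb => hx ⟨r, ⟨hr.1, hrb⟩, rfl⟩, hr.2⟩, rfl⟩

lemma dist_lt_of_notMem_image_coe_Icc {a b : ℝ} {x y : AddCircle p}
    (hx : x ∉ ((↑) : ℝ → AddCircle p) '' Icc a b) (hy : y ∉ ((↑) : ℝ → AddCircle p) '' Icc a b) :
    dist x y < p - (b - a) := by
  obtain ⟨r, hr, rfl⟩ := exists_mem_Ioo_coe_eq_of_notMem hx
  obtain ⟨s, hs, rfl⟩ := exists_mem_Ioo_coe_eq_of_notMem hy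
  refine (dist_coe_addCircle_le r s).trans_lt (abs_lt.2 ⟨?_, ?_⟩) <;>
    linarith [hr.1, hr.2, hs.1, hs.2]

lemma image_coe_Icc_subset_closedBall {a b : ℝ} {x y : AddCircle p}
    (hx : x ∉ ((↑) : ℝ → AddCircle p) '' Icc a b) (hy : y ∉ ((↑) : ℝ → AddCircle p) '' Icc a b)
    (hxy : dist (a : AddCircle p) b < dist x y) :
    ((↑) : ℝ → AddCircle p) '' Icc a b ⊆ Metric.closedBall ↑a (dist (a : AddCircle p) b) := by
  rintro _ ⟨r, hr, rfl⟩
  have hgap := hxy.trans (dist_lt_of_notMem_image_coe_Icc hx hy)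
  have hhalf : b - a ≤ p / 2 := by
    by_contra! hlong
    have habs : |a + p - b| = p - (b - a) := by
      rw [abs_of_pos] <;> linarith [dist_nonneg (x := (a : AddCircle p)) (y := b)]
    rw [← AddCircle.coe_add_period p a, dist_coe_addCircle_of_abs_sub_le (by linarith)] at hgap
    linarith
  have habs : |a - b| = b - a := by
    rw [abs_sub_comm, abs_of_nonneg (by linarith [hr.1, hr.2])]
  calc dist (r : AddCircle p) a ≤ |r - a| := dist_coe_addCircle_le r a
    _ = r - a := abs_of_nonneg (by linarith [hr.1])
    _ ≤ |a - b| := by linarith [hr.2]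
    _ = dist (a : AddCircle p) b := (dist_coe_addCircle_of_abs_sub_le (habs.trans_le hhalf)).symm

lemma volume_addCircle_le_two_mul_ediam (s : Set (AddCircle p)) :
    volume s ≤ 2 * Metric.ediam s := by
  rcases s.eq_empty_or_nonempty with rfl | ⟨x, hx⟩
  · simp
  have hbdd : Metric.ediam s ≠ ∞ := (Bornology.IsBounded.all s).ediam_ne_top
  calc volume s ≤ volume (Metric.closedBall x (Metric.diam s)) :=
        measure_mono fun y hy => Metric.dist_le_diam_of_mem' hbdd hy hx
    _ = ENNReal.ofReal (min p (2 * Metric.diam s)) := AddCircle.volume_closedBall p _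
    _ ≤ ENNReal.ofReal (2 * Metric.diam s) := ENNReal.ofReal_le_ofReal (min_le_right _ _)
    _ = 2 * Metric.ediam s := by
        rw [ENNReal.ofReal_mul zero_le_two, ENNReal.ofReal_ofNat, Metric.diam,
          ENNReal.ofReal_toReal hbdd]

end Arcs

lemma continuous_circleProj : Continuous circleProj := AddCircle.continuous_mk' 1

lemma isOpenMap_circleProj : IsOpenMap circleProj := QuotientAddGroup.isOpenMap_coe

lemma surjective_circleProj : Function.Surjective circleProj := QuotientAddGroup.mk_surjective

lemma exists_rat_arc_subset {U : Set UnitAddCircle} (hU : IsOpen U) {x : UnitAddCircle}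
    (hx : x ∈ U) :
    ∃ a b : ℚ, x ∈ circleProj '' Ioo (a : ℝ) b ∧ circleProj '' Icc (a : ℝ) b ⊆ U := by
  obtain ⟨r, rfl⟩ := surjective_circleProj x
  obtain ⟨ε, hε, hball⟩ := Metric.isOpen_iff.1 (hU.preimage continuous_circleProj) r hx
  obtain ⟨a, hεa, har⟩ := exists_rat_btwn (sub_lt_self r hε)
  obtain ⟨b, hrb, hbε⟩ := exists_rat_btwn (lt_add_of_pos_right r hε)
  refine ⟨a, b, ⟨r, ⟨har, hrb⟩, rfl⟩, image_subset_iff.2 fun s hs => hball ?_⟩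
  rw [Real.ball_eq_Ioo]
  exact ⟨hεa.trans_le hs.1, hs.2.trans_lt hbε⟩

namespace OrientPreserving

variable {f : UnitAddCircle ≃ₜ UnitAddCircle}

lemma exists_image_arc_eq (hf : OrientPreserving f) (a b : ℝ) :
    ∃ c d : ℝ, f (circleProj a) = circleProj c ∧ f (circleProj b) = circleProj d ∧
      f '' (circleProj '' Icc a b) = circleProj '' Icc c d := by
  obtain ⟨F, hF, hF1, hFf⟩ := hf
  let G : CircleDeg1Lift := ⟨⟨F, hF.monotone⟩, hF1⟩
  have hsurj : Function.Surjective F := by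
    intro s
    obtain ⟨x, hx⟩ := f.surjective (circleProj s)
    obtain ⟨r, rfl⟩ := surjective_circleProj x
    obtain ⟨n, hn⟩ : ∃ n : ℤ, n • (1 : ℝ) = s - F r := by
      rw [← AddCircle.coe_eq_zero_iff, AddCircle.coe_sub, sub_eq_zero]
      exact (hx.symm.trans (hFf r))
    refine ⟨r + n, (G.map_add_int r n).trans ?_⟩
    rw [zsmul_one] at hn
    exact add_eq_of_eq_sub' hn
  refine ⟨F a, F b, hFf a, hFf b, ?_⟩
  calc f '' (circleProj '' Icc a b) = circleProj '' (F '' Icc a b) := by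
        simp only [image_image, hFf]
    _ = circleProj '' Icc (F a) (F b) := by
        rw [← hF.coe_orderIsoOfSurjective F hsurj, OrderIso.image_Icc]

lemma image_arc_subset_closedBall (hf : OrientPreserving f) {a b : ℝ} {x y : UnitAddCircle}
    (hx : x ∉ f '' (circleProj '' Icc a b)) (hy : y ∉ f '' (circleProj '' Icc a b))
    (hxy : dist (f (circleProj a)) (f (circleProj b)) < dist x y) :
    f '' (circleProj '' Icc a b) ⊆
      Metric.closedBall (f (circleProj a)) (dist (f (circleProj a)) (f (circleProj b))) := by
  obtain ⟨c, d, hc, hd, himage⟩ := hf.exists_image_arc_eq a b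
  rw [himage] at hx hy ⊢
  rw [hc, hd] at hxy ⊢
  have : Fact ((0 : ℝ) < 1) := ⟨one_pos⟩
  exact image_coe_Icc_subset_closedBall hx hy hxy

end OrientPreserving

lemma lowerSemicontinuous_measure_setOf_mem {Ω X Y : Type*} [MeasurableSpace Ω]
    [TopologicalSpace X] [SequentialSpace X] [TopologicalSpace Y] (μ : Measure Ω) {g : Ω → X → Y}
    (hg : ∀ ω, Continuous (g ω)) {U : Set Y} (hU : IsOpen U) :
    LowerSemicontinuous fun x => μ {ω | g ω x ∈ U} := by
  refine lowerSemicontinuous_iff_isClosed_preimage.2 fun c => IsSeqClosed.isClosed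
    fun u x hu hx => ?_
  have hsub : {ω | g ω x ∈ U} ⊆ ⋃ N, ⋂ n ≥ N, {ω | g ω (u n) ∈ U} := fun ω hω => by
    have hev : ∀ᶠ n in atTop, g ω (u n) ∈ U :=
      (((hg ω).tendsto x).comp hx).eventually (hU.mem_nhds hω)
    simpa only [mem_iUnion, mem_iInter, mem_ofPred_eq, eventually_atTop] using hev
  have hmono : Monotone fun N => ⋂ n ≥ N, {ω | g ω (u n) ∈ U} :=
    fun _ _ hMN => biInter_subset_biInter_left fun _ => hMN.trans
  calc μ {ω | g ω x ∈ U} ≤ μ (⋃ N, ⋂ n ≥ N, {ω | g ω (u n) ∈ U}) := measure_mono hsub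
    _ = ⨆ N, μ (⋂ n ≥ N, {ω | g ω (u n) ∈ U}) := hmono.measure_iUnion
    _ ≤ c := iSup_le fun N => (measure_mono (biInter_subset_of_mem le_rfl)).trans (hu N)

lemma measure_setOf_prodMk_mem_of_indepFun {Ω α β : Type*} [MeasurableSpace Ω]
    {mα : MeasurableSpace α} {mβ : MeasurableSpace β} {μ : Measure Ω} [IsFiniteMeasure μ]
    {X : Ω → α} {Y : Ω → β} (hX : Measurable X) (hY : Measurable Y)
    (hXY : ProbabilityTheory.IndepFun X Y μ) {C : Set (α × β)} (hC : MeasurableSet C) :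
    μ {ω | (X ω, Y ω) ∈ C} = ∫⁻ ω, μ {ω' | (X ω, Y ω') ∈ C} ∂μ := by
  have hlaw := (ProbabilityTheory.indepFun_iff_map_prod_eq_prod_map_map hX.aemeasurable
    hY.aemeasurable).1 hXY
  calc μ {ω | (X ω, Y ω) ∈ C} = μ.map (fun ω => (X ω, Y ω)) C :=
        (Measure.map_apply (hX.prodMk hY) hC).symm
    _ = ∫⁻ x, μ.map Y (Prod.mk x ⁻¹' C) ∂(μ.map X) := by rw [hlaw, Measure.prod_apply hC]
    _ = ∫⁻ ω, μ.map Y (Prod.mk (X ω) ⁻¹' C) ∂μ :=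
        lintegral_map (measurable_measure_prodMk_left hC) hX
    _ = ∫⁻ ω, μ {ω' | (X ω, Y ω') ∈ C} ∂μ :=
        lintegral_congr fun ω => Measure.map_apply hY (measurable_prodMk_left hC)

lemma tendsto_atTop_inf_principal_iff_of_subset {ι X : Type*} [SemilatticeSup ι] [Nonempty ι]
    [TopologicalSpace X] [RegularSpace X] {T D : Set ι} (hDT : D ⊆ T) {h : ι → X}
    (hh : ∀ t ∈ T, ∃ u : ℕ → ι, (∀ n, u n ∈ D) ∧ (∀ n, t ≤ u n) ∧
      Tendsto (fun n => h (u n)) atTop (𝓝 (h t))) {x : X} :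
    Tendsto h (atTop ⊓ 𝓟 T) (𝓝 x) ↔ Tendsto h (atTop ⊓ 𝓟 D) (𝓝 x) := by
  refine ⟨fun hT => hT.mono_left (inf_le_inf_left _ (principal_mono.2 hDT)), fun hD => ?_⟩
  refine (closed_nhds_basis x).tendsto_right_iff.2 fun C ⟨hCx, hC⟩ => ?_
  have hev := hD.eventually hCx
  rw [eventually_inf_principal, eventually_atTop] at hev ⊢
  obtain ⟨N, hN⟩ := hev
  refine ⟨N, fun t hNt ht => ?_⟩
  obtain ⟨u, huD, htu, hu⟩ := hh t ht
  exact hC.mem_of_tendsto hu (Eventually.of_forall fun n => hN _ (hNt.trans (htu n)) (huD n))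

namespace RDS

variable {Ω : Type} [m : MeasurableSpace Ω] (S : RDS Ω)

instance : IsProbabilityMeasure S.P := S.P_prob

lemma natCast_mem_T (n : ℕ) : (n : ℝ) ∈ S.T := by
  rcases S.T_cases with h | h <;> rw [h]
  · exact mem_range_self n
  · exact mem_Ici.2 n.cast_nonneg

lemma add_mem_T {s t : ℝ} (hs : s ∈ S.T) (ht : t ∈ S.T) : s + t ∈ S.T := by
  rcases S.T_cases with h | h <;> rw [h] at hs ht ⊢
  · obtain ⟨i, rfl⟩ := hs
    obtain ⟨j, rfl⟩ := ht
    exact ⟨i + j, Nat.cast_add i j⟩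
  · exact mem_Ici.2 (add_nonneg hs ht)

lemma sub_mem_T {s t : ℝ} (hs : s ∈ S.T) (ht : t ∈ S.T) (hst : s ≤ t) : t - s ∈ S.T := by
  rcases S.T_cases with h | h <;> rw [h] at hs ht ⊢
  · obtain ⟨i, rfl⟩ := hs
    obtain ⟨j, rfl⟩ := ht
    exact ⟨j - i, Nat.cast_sub (Nat.cast_le.1 hst)⟩
  · exact sub_nonneg.2 hst

lemma eventually_mem_T : ∀ᶠ t in S.tFilter, t ∈ S.T :=
  mem_inf_of_right (mem_principal_self S.T)

lemma eventually_ge_tFilter (s : ℝ) : ∀ᶠ t in S.tFilter, s ≤ t :=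
  mem_inf_of_left (eventually_ge_atTop s)

lemma tendsto_sub_const_tFilter {s : ℝ} (hs : s ∈ S.T) :
    Tendsto (fun t => t - s) S.tFilter S.tFilter := by
  refine tendsto_inf.2 ⟨(tendsto_atTop_add_const_right _ (-s) tendsto_id).mono_left inf_le_left,
    tendsto_principal.2 ?_⟩
  filter_upwards [S.eventually_mem_T, S.eventually_ge_tFilter s] with t ht hst
  exact S.sub_mem_T hs ht hst

lemma φ_eq_φ_sub {s t : ℝ} (hs : s ∈ S.T) (ht : t ∈ S.T) (hst : s ≤ t) (ω : Ω)
    (x : UnitAddCircle) : S.φ t ω x = S.φ (t - s) (S.θ s ω) (S.φ s ω x) := by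
  rw [← S.φ_cocycle s hs (t - s) (S.sub_mem_T hs ht hst), add_sub_cancel]

/-- A countable set of times from which every time can be approached from the right, so that a
right-continuous path is determined by its values there. -/
def ratTimes : Set ℝ := S.T ∩ range ((↑) : ℚ → ℝ)

lemma countable_ratTimes : S.ratTimes.Countable := (countable_range _).mono inter_subset_right

lemma exists_seq_ratTimes_tendsto {t : ℝ} (ht : t ∈ S.T) :
    ∃ u : ℕ → ℝ, (∀ n, u n ∈ S.ratTimes) ∧ (∀ n, t ≤ u n) ∧
      ∀ ω x, Tendsto (fun n => S.φ (u n) ω x) atTop (𝓝 (S.φ t ω x)) := by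
  rcases S.T_cases with hT | hT
  · obtain ⟨n, rfl⟩ := hT ▸ ht
    exact ⟨fun _ => n, fun _ => ⟨ht, n, Rat.cast_natCast n⟩, fun _ => le_rfl,
      fun _ _ => tendsto_const_nhds⟩
  · obtain ⟨u, hanti, hgt, hlim⟩ := Real.exists_seq_rat_strictAnti_tendsto t
    have huT : ∀ n, (u n : ℝ) ∈ S.T := fun n => by
      rw [hT] at ht ⊢
      exact le_trans ht (hgt n).le
    refine ⟨fun n => u n, fun n => ⟨huT n, mem_range_self _⟩, fun n => (hgt n).le, fun ω x => ?_⟩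
    exact S.φ_cadlag_right ω t ht _ huT (Rat.cast_mono.comp_antitone hanti.antitone) hlim
      _ x tendsto_const_nhds

lemma measurable_φ_apply_F {t : ℝ} (ht : t ∈ S.T) (x : UnitAddCircle) :
    Measurable[S.F t] fun ω => S.φ t ω x :=
  (S.φ_meas t ht).comp (measurable_prodMk_right (m := S.F t))

lemma measurable_φ_apply {t : ℝ} (ht : t ∈ S.T) (x : UnitAddCircle) :
    Measurable fun ω => S.φ t ω x :=
  (S.measurable_φ_apply_F ht x).mono (S.F_le t ht) le_rfl

lemma measurableSet_tendsto_dist (x y : UnitAddCircle) :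
    MeasurableSet {ω | Tendsto (fun t => dist (S.φ t ω x) (S.φ t ω y)) S.tFilter (𝓝 0)} := by
  have hrat : ∀ ω : Ω, Tendsto (fun t => dist (S.φ t ω x) (S.φ t ω y)) S.tFilter (𝓝 0) ↔
      Tendsto (fun t : S.ratTimes => dist (S.φ t.1 ω x) (S.φ t.1 ω y)) (comap Subtype.val atTop)
        (𝓝 0) := by
    intro ω
    rw [tFilter, tendsto_atTop_inf_principal_iff_of_subset (D := S.ratTimes) inter_subset_left,
      ← map_comap_setCoe_val, tendsto_map'_iff]
    · rfl
    · intro t ht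
      obtain ⟨u, hu, htu, hlim⟩ := S.exists_seq_ratTimes_tendsto ht
      exact ⟨u, hu, htu, (hlim ω x).dist (hlim ω y)⟩
  have : Countable S.ratTimes := S.countable_ratTimes
  simp only [hrat]
  exact measurableSet_tendsto _ fun t =>
    (S.measurable_φ_apply t.2.1 x).dist (S.measurable_φ_apply t.2.1 y)

lemma ae_tendsto_dist_iff (x y : UnitAddCircle) :
    (∀ᵐ ω ∂S.P, Tendsto (fun t => dist (S.φ t ω x) (S.φ t ω y)) S.tFilter (𝓝 0)) ↔
      S.P {ω | Tendsto (fun t => dist (S.φ t ω x) (S.φ t ω y)) S.tFilter (𝓝 0)} = 1 :=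
  mem_ae_iff_prob_eq_one (S.measurableSet_tendsto_dist x y)

lemma indep_F_comap_θ {t : ℝ} (ht : t ∈ S.T) :
    ProbabilityTheory.Indep (S.F t) (S.Fplus.comap (S.θ t)) S.P :=
  (ProbabilityTheory.Indep_iff _ _ _).2 fun E B hE hB => by
    obtain ⟨A, hA, rfl⟩ := hB
    rw [S.θ_indep t ht E A hE hA, (S.θ_preserving t ht).measure_preimage]
    exact ((iSup₂_le S.F_le : S.Fplus ≤ m) A hA).nullMeasurableSet

lemma fwdTrans_add {s t : ℝ} (hs : s ∈ S.T) (ht : t ∈ S.T) (x : UnitAddCircle)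
    {A : Set UnitAddCircle} (hA : MeasurableSet A) :
    S.fwdTrans (s + t) x A = ∫⁻ ω, S.fwdTrans t (S.φ s ω x) A ∂S.P := by
  have hindep : @ProbabilityTheory.IndepFun _ _ _ _ _ (S.F t) (fun ω => S.φ s ω x) (S.θ s) S.P :=
    ProbabilityTheory.indep_of_indep_of_le_left
      (ProbabilityTheory.indep_of_indep_of_le_right (S.indep_F_comap_θ hs)
        (MeasurableSpace.comap_mono (le_iSup₂_of_le t ht le_rfl)))
      (S.measurable_φ_apply_F hs x).comap_le
  have hθ : @Measurable _ _ m (S.F t) (S.θ s) :=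
    (S.θ_preserving s hs).measurable.mono le_rfl (S.F_le t ht)
  have hC : @MeasurableSet _ (@Prod.instMeasurableSpace _ _ _ (S.F t))
      {q : UnitAddCircle × Ω | S.φ t q.2 q.1 ∈ A} :=
    (S.φ_meas t ht).comp (@measurable_swap _ _ _ (S.F t)) hA
  calc S.fwdTrans (s + t) x A = S.P {ω | S.φ t (S.θ s ω) (S.φ s ω x) ∈ A} := by
        simp only [fwdTrans, S.φ_cocycle s hs t ht]
    _ = ∫⁻ ω, S.P {ω' | S.φ t (S.θ s ω') (S.φ s ω x) ∈ A} ∂S.P :=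
        measure_setOf_prodMk_mem_of_indepFun (S.measurable_φ_apply hs x) hθ hindep hC
    _ = ∫⁻ ω, S.fwdTrans t (S.φ s ω x) A ∂S.P :=
        lintegral_congr fun ω => (S.θ_preserving s hs).measure_preimage
          (S.measurable_φ_apply ht (S.φ s ω x) hA).nullMeasurableSet

lemma lowerSemicontinuous_fwdTrans (t : ℝ) {U : Set UnitAddCircle} (hU : IsOpen U) :
    LowerSemicontinuous fun x => S.fwdTrans t x U :=
  lowerSemicontinuous_measure_setOf_mem S.P (fun ω => (S.φ t ω).continuous) hU

lemma measurable_fwdTrans (t : ℝ) {U : Set UnitAddCircle} (hU : IsOpen U) :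
    Measurable fun x => S.fwdTrans t x U :=
  (S.lowerSemicontinuous_fwdTrans t hU).measurable

section ForwardInvariance

variable {S} {U : Set UnitAddCircle}

lemma ForwardInvariant.ae_mem_of_le (hU : S.ForwardInvariant U) {s : ℝ} (hs : s ∈ S.T)
    (x : UnitAddCircle) : ∀ᵐ ω ∂S.P, ∀ t ∈ S.T, s ≤ t → S.φ s ω x ∈ U → S.φ t ω x ∈ U := by
  filter_upwards [(S.θ_preserving s hs).quasiMeasurePreserving.ae hU] with ω hω t ht hst hx
  rw [S.φ_eq_φ_sub hs ht hst]
  exact hω _ (S.sub_mem_T hs ht hst) (mem_image_of_mem _ hx)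

lemma ForwardInvariant.fwdTrans_mono (hU : S.ForwardInvariant U) {s t : ℝ} (hs : s ∈ S.T)
    (ht : t ∈ S.T) (hst : s ≤ t) (x : UnitAddCircle) : S.fwdTrans s x U ≤ S.fwdTrans t x U := by
  refine measure_mono_ae ?_
  filter_upwards [hU.ae_mem_of_le hs x] with ω hω using hω t ht hst

lemma ForwardInvariant.compl_of_finite (hU : S.ForwardInvariant U) (hfin : Uᶜ.Finite) :
    S.ForwardInvariant Uᶜ := by
  filter_upwards [hU] with ω hω t ht
  have hsub : Uᶜ ⊆ S.φ t ω '' Uᶜ := by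
    rw [image_compl_eq (S.φ t ω).bijective]
    exact compl_subset_compl.2 (hω t ht)
  exact ((hfin.image _).eq_of_subset_of_encard_le' hsub (encard_image_le _ _)).ge

lemma forwardInvariant_of_isClosed {K : Set UnitAddCircle} (hK : IsClosed K)
    (h : ∀ t ∈ S.T, ∀ x ∈ K, ∀ᵐ ω ∂S.P, S.φ t ω x ∈ K) : S.ForwardInvariant K := by
  obtain ⟨D, hDK, hDcount, hDdense⟩ :=
    (TopologicalSpace.IsSeparable.of_separableSpace K).exists_countable_dense_subset
  have hD : ∀ᵐ ω ∂S.P, ∀ t ∈ S.ratTimes, ∀ x ∈ D, S.φ t ω x ∈ K :=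
    (ae_ball_iff S.countable_ratTimes).2 fun t ht =>
      (ae_ball_iff hDcount).2 fun x hx => h t ht.1 x (hDK hx)
  filter_upwards [hD] with ω hω t ht
  have hrat : ∀ r ∈ S.ratTimes, MapsTo (S.φ r ω) K K := fun r hr =>
    ((closure_minimal (hω r hr) (hK.preimage (S.φ r ω).continuous)).trans' hDdense)
  obtain ⟨u, hu, -, hlim⟩ := S.exists_seq_ratTimes_tendsto ht
  rintro _ ⟨x, hx, rfl⟩
  exact hK.mem_of_tendsto (hlim ω x) (Eventually.of_forall fun n => hrat _ (hu n) hx)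

variable (S U) in
/-- The points from which `U` is almost surely not entered at integer times. For open
forward-invariant `U` this is the largest forward-invariant set disjoint from `U`. -/
def avoiding : Set UnitAddCircle := {x | ∀ n : ℕ, S.fwdTrans n x U = 0}

lemma isClosed_avoiding (hU : IsOpen U) : IsClosed (S.avoiding U) := by
  simp only [avoiding, ← nonpos_iff_eq_zero, ofPred_forall]
  exact isClosed_iInter fun n => (S.lowerSemicontinuous_fwdTrans n hU).isClosed_preimage 0

lemma avoiding_subset_compl : S.avoiding U ⊆ Uᶜ := fun x hx hxU => by
  simpa [fwdTrans, S.φ_zero, hxU] using hx 0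

lemma ForwardInvariant.avoiding (hinv : S.ForwardInvariant U) (hU : IsOpen U) :
    S.ForwardInvariant (S.avoiding U) := by
  refine forwardInvariant_of_isClosed (isClosed_avoiding hU) fun t ht x hx => ?_
  refine ae_all_iff.2 fun n => ?_
  have hn := S.natCast_mem_T n
  have hzero : ∫⁻ ω, S.fwdTrans n (S.φ t ω x) U ∂S.P = 0 := by
    obtain ⟨N, hN⟩ := exists_nat_ge (t + n)
    rw [← S.fwdTrans_add ht hn x hU.measurableSet, ← nonpos_iff_eq_zero, ← hx N]
    exact hinv.fwdTrans_mono (S.add_mem_T ht hn) (S.natCast_mem_T N) hN x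
  exact (lintegral_eq_zero_iff
    ((S.measurable_fwdTrans n hU).comp (S.measurable_φ_apply ht x))).1 hzero

lemma ForwardInvariant.exists_forall_le_fwdTrans (hinv : S.ForwardInvariant U) (hU : IsOpen U)
    (havoid : S.avoiding U = ∅) : ∃ n : ℕ, ∃ c > 0, ∀ x, c ≤ S.fwdTrans n x U := by
  have hmono : Monotone fun n : ℕ => {x | 0 < S.fwdTrans n x U} := fun i j hij x hx =>
    lt_of_lt_of_le hx (hinv.fwdTrans_mono (S.natCast_mem_T i) (S.natCast_mem_T j)
      (Nat.cast_le.2 hij) x)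
  have hcover : univ ⊆ ⋃ n : ℕ, {x | 0 < S.fwdTrans n x U} := fun x _ => by
    have hx : x ∉ S.avoiding U := havoid ▸ notMem_empty x
    simpa [RDS.avoiding, pos_iff_ne_zero] using hx
  obtain ⟨n, hn⟩ := isCompact_univ.elim_directed_cover _
    (fun n : ℕ => (S.lowerSemicontinuous_fwdTrans n hU).isOpen_preimage 0) hcover hmono.directed_le
  obtain ⟨x₀, -, hmin⟩ := LowerSemicontinuousOn.exists_isMinOn univ_nonempty isCompact_univ
    ((S.lowerSemicontinuous_fwdTrans n hU).lowerSemicontinuousOn univ)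
  exact ⟨n, S.fwdTrans n x₀ U, hn (mem_univ x₀), fun x => hmin (mem_univ x)⟩

lemma fwdTrans_compl {t : ℝ} (ht : t ∈ S.T) (hU : MeasurableSet U) (x : UnitAddCircle) :
    S.fwdTrans t x Uᶜ = 1 - S.fwdTrans t x U :=
  prob_compl_eq_one_sub (S.measurable_φ_apply ht x hU)

lemma ForwardInvariant.fwdTrans_add_compl_le (hinv : S.ForwardInvariant U)
    (hU : MeasurableSet U) {s t : ℝ} (hs : s ∈ S.T) (ht : t ∈ S.T) {c : ℝ≥0∞}
    (hc : ∀ x, c ≤ S.fwdTrans t x U) (x : UnitAddCircle) :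
    S.fwdTrans (s + t) x Uᶜ ≤ (1 - c) * S.fwdTrans s x Uᶜ := by
  have hpt : ∀ y, S.fwdTrans t y Uᶜ ≤ Uᶜ.indicator (fun _ => 1 - c) y := by
    intro y
    by_cases hy : y ∈ U
    · rw [indicator_of_notMem (not_not.2 hy)]
      refine (measure_eq_zero_iff_ae_notMem.2 ?_).le
      filter_upwards [hinv] with ω hω using not_not.2 (hω t ht (mem_image_of_mem _ hy))
    · rw [indicator_of_mem hy, fwdTrans_compl ht hU]
      exact tsub_le_tsub_left (hc y) 1
  calc S.fwdTrans (s + t) x Uᶜ = ∫⁻ ω, S.fwdTrans t (S.φ s ω x) Uᶜ ∂S.P :=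
        S.fwdTrans_add hs ht x hU.compl
    _ ≤ ∫⁻ ω, {ω | S.φ s ω x ∈ Uᶜ}.indicator (fun _ => 1 - c) ω ∂S.P :=
        lintegral_mono fun ω => hpt (S.φ s ω x)
    _ = (1 - c) * S.fwdTrans s x Uᶜ :=
        lintegral_indicator_const (S.measurable_φ_apply hs x hU.compl) _

lemma ForwardInvariant.ae_exists_mem (hinv : S.ForwardInvariant U) (hU : IsOpen U)
    (havoid : S.avoiding U = ∅) (x : UnitAddCircle) : ∀ᵐ ω ∂S.P, ∃ n : ℕ, S.φ n ω x ∈ U := by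
  obtain ⟨n, c, hc, hle⟩ := hinv.exists_forall_le_fwdTrans hU havoid
  have hgeom : ∀ k : ℕ, S.fwdTrans (k * n : ℕ) x Uᶜ ≤ (1 - c) ^ k := by
    intro k
    induction k with
    | zero => rw [pow_zero]; exact prob_le_one
    | succ k ih =>
      rw [add_one_mul, Nat.cast_add, pow_succ']
      exact (hinv.fwdTrans_add_compl_le hU.measurableSet (S.natCast_mem_T _) (S.natCast_mem_T n)
        hle x).trans (mul_le_mul_right ih _)
  have hlim : Tendsto (fun k : ℕ => (1 - c) ^ k) atTop (𝓝 0) :=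
    ENNReal.tendsto_pow_atTop_nhds_zero_of_lt_one
      (ENNReal.sub_lt_self one_ne_top one_ne_zero hc.ne')
  refine ae_iff.2 (nonpos_iff_eq_zero.1 (ge_of_tendsto' hlim fun k => ?_))
  exact (measure_mono fun ω hω => not_exists.1 hω (k * n)).trans (hgeom k)

end ForwardInvariance

section Contraction

variable {ω : Ω}

/-- The sample point `ω` asymptotically contracts `V` to a point. Contraction is measured by the
extended diameter, which bounds Lebesgue measure in `ℝ≥0∞` and specialises to the distance on
pairs. -/
def Contracts (ω : Ω) (V : Set UnitAddCircle) : Prop :=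
  Tendsto (fun t => Metric.ediam (S.φ t ω '' V)) S.tFilter (𝓝 0)

/-- The points `x` and `y` lie in a common open set which `ω` contracts; for `x = y` this is local
stability at `x`. -/
def JointlyContracts (ω : Ω) (x y : UnitAddCircle) : Prop :=
  ∃ V, IsOpen V ∧ x ∈ V ∧ y ∈ V ∧ S.Contracts ω V

variable {S}

lemma contracts_pair_iff {x y : UnitAddCircle} : S.Contracts ω {x, y} ↔
    Tendsto (fun t => dist (S.φ t ω x) (S.φ t ω y)) S.tFilter (𝓝 0) := by
  simp only [Contracts, image_pair, Metric.ediam_pair, dist_edist]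
  exact (ENNReal.tendsto_toReal_zero_iff fun _ => edist_ne_top _ _).symm

lemma Contracts.mono {V W : Set UnitAddCircle} (hW : S.Contracts ω W) (hVW : V ⊆ W) :
    S.Contracts ω V :=
  tendsto_of_tendsto_of_tendsto_of_le_of_le tendsto_const_nhds hW (fun _ => zero_le)
    fun _ => Metric.ediam_mono (image_mono hVW)

lemma Contracts.tendsto_volume {V : Set UnitAddCircle} (hV : S.Contracts ω V) :
    Tendsto (fun t => volume (S.φ t ω '' V)) S.tFilter (𝓝 0) := by
  have : Fact ((0 : ℝ) < 1) := ⟨one_pos⟩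
  have hlim : Tendsto (fun t => 2 * Metric.ediam (S.φ t ω '' V)) S.tFilter (𝓝 0) := by
    simpa only [mul_zero] using ENNReal.Tendsto.const_mul hV (Or.inr ofNat_ne_top)
  exact tendsto_of_tendsto_of_tendsto_of_le_of_le tendsto_const_nhds hlim (fun _ => zero_le)
    fun _ => volume_addCircle_le_two_mul_ediam _

lemma Contracts.union {V W : Set UnitAddCircle} {x y : UnitAddCircle} (hV : S.Contracts ω V)
    (hW : S.Contracts ω W) (hxy : S.Contracts ω {x, y}) (hx : x ∈ V) (hy : y ∈ W) :
    S.Contracts ω (V ∪ W) := by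
  have hlim : Tendsto (fun t => Metric.ediam (S.φ t ω '' V) + Metric.ediam (S.φ t ω '' {x, y}) +
      Metric.ediam (S.φ t ω '' W)) S.tFilter (𝓝 0) := by
    simpa only [add_zero] using (hV.add hxy).add hW
  refine tendsto_of_tendsto_of_tendsto_of_le_of_le tendsto_const_nhds hlim (fun _ => zero_le)
    fun t => ?_
  simp only [image_union, image_pair, Metric.ediam_pair]
  exact Metric.ediam_union_le_add_edist (mem_image_of_mem _ hx) (mem_image_of_mem _ hy)

lemma Contracts.of_θ {s : ℝ} (hs : s ∈ S.T) {V : Set UnitAddCircle}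
    (hV : S.Contracts (S.θ s ω) (S.φ s ω '' V)) : S.Contracts ω V := by
  refine (hV.comp (S.tendsto_sub_const_tFilter hs)).congr' ?_
  filter_upwards [S.eventually_mem_T, S.eventually_ge_tFilter s] with t ht hst
  simp only [Function.comp_apply, image_image, ← S.φ_eq_φ_sub hs ht hst]

lemma contracts_arc {a b : ℝ} {p q : UnitAddCircle} (hpq : p ≠ q)
    (hp : ∀ t ∈ S.T, p ∉ S.φ t ω '' (circleProj '' Icc a b))
    (hq : ∀ t ∈ S.T, q ∉ S.φ t ω '' (circleProj '' Icc a b))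
    (hab : S.Contracts ω {circleProj a, circleProj b}) :
    S.Contracts ω (circleProj '' Icc a b) := by
  rw [contracts_pair_iff] at hab
  have hlim : Tendsto (fun t => 2 * ENNReal.ofReal (dist (S.φ t ω (circleProj a))
      (S.φ t ω (circleProj b)))) S.tFilter (𝓝 0) := by
    simpa only [ofReal_zero, mul_zero] using
      ENNReal.Tendsto.const_mul (ENNReal.tendsto_ofReal hab) (Or.inr ofNat_ne_top)
  refine tendsto_of_tendsto_of_tendsto_of_le_of_le' tendsto_const_nhds hlim
    (Eventually.of_forall fun _ => zero_le) ?_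
  filter_upwards [S.eventually_mem_T, hab.eventually_lt_const (dist_pos.2 hpq)] with t ht hclose
  refine (Metric.ediam_mono ((S.φ_orient t ht ω).image_arc_subset_closedBall (hp t ht) (hq t ht)
    hclose)).trans ?_
  rw [← Metric.closedEBall_ofReal dist_nonneg]
  exact Metric.ediam_closedEBall_le

lemma JointlyContracts.tendsto_dist {x y : UnitAddCircle} (h : S.JointlyContracts ω x y) :
    Tendsto (fun t => dist (S.φ t ω x) (S.φ t ω y)) S.tFilter (𝓝 0) := by
  obtain ⟨V, -, hx, hy, hV⟩ := h
  exact contracts_pair_iff.1 (hV.mono (pair_subset hx hy))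

lemma JointlyContracts.of_θ {s : ℝ} (hs : s ∈ S.T) {x y : UnitAddCircle}
    (h : S.JointlyContracts (S.θ s ω) (S.φ s ω x) (S.φ s ω y)) : S.JointlyContracts ω x y := by
  obtain ⟨V, hVo, hx, hy, hV⟩ := h
  exact ⟨S.φ s ω ⁻¹' V, hVo.preimage (S.φ s ω).continuous, hx, hy,
    Contracts.of_θ hs (hV.mono (image_preimage_subset _ _))⟩

lemma jointlyContracts_of_image_subset {U : Set UnitAddCircle} (hU : IsOpen U)
    (hinv : ∀ t ∈ S.T, S.φ t ω '' U ⊆ U) {p q : UnitAddCircle} (hp : p ∉ U) (hq : q ∉ U)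
    (hpq : p ≠ q)
    (hrat : ∀ a b : ℚ, circleProj a ∈ U → circleProj b ∈ U →
      S.Contracts ω {circleProj a, circleProj b})
    {x y : UnitAddCircle} (hx : x ∈ U) (hy : y ∈ U) : S.JointlyContracts ω x y := by
  have harc : ∀ {z}, z ∈ U → ∃ a b : ℚ, z ∈ circleProj '' Ioo (a : ℝ) b ∧ circleProj a ∈ U ∧
      circleProj a ∈ circleProj '' Icc (a : ℝ) b ∧ S.Contracts ω (circleProj '' Icc (a : ℝ) b) := by
    intro z hz
    obtain ⟨a, b, hzab, hab⟩ := exists_rat_arc_subset hU hz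
    have hle : (a : ℝ) ≤ b := (nonempty_Ioo.1 (image_nonempty.1 ⟨z, hzab⟩)).le
    have ha := mem_image_of_mem circleProj (left_mem_Icc.2 hle)
    have hb := mem_image_of_mem circleProj (right_mem_Icc.2 hle)
    have himage : ∀ t ∈ S.T, S.φ t ω '' (circleProj '' Icc (a : ℝ) b) ⊆ U := fun t ht =>
      (image_mono hab).trans (hinv t ht)
    exact ⟨a, b, hzab, hab ha, ha, contracts_arc hpq (fun t ht h => hp (himage t ht h))
      (fun t ht h => hq (himage t ht h)) (hrat a b (hab ha) (hab hb))⟩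
  obtain ⟨a, b, hxab, haU, ha, hab⟩ := harc hx
  obtain ⟨c, d, hycd, hcU, hc, hcd⟩ := harc hy
  refine ⟨circleProj '' Ioo (a : ℝ) b ∪ circleProj '' Ioo (c : ℝ) d,
    (isOpenMap_circleProj _ isOpen_Ioo).union (isOpenMap_circleProj _ isOpen_Ioo),
    Or.inl hxab, Or.inr hycd, ?_⟩
  exact (hab.union hcd (hrat a c haU hcU) ha hc).mono
    (union_subset_union (image_mono Ioo_subset_Icc_self) (image_mono Ioo_subset_Icc_self))

end Contraction

section Synchronisation

variable {S} {U : Set UnitAddCircle}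

lemma stablySynchronising_of_ae_jointlyContracts
    (h : ∀ x y, ∀ᵐ ω ∂S.P, S.JointlyContracts ω x y) : S.StablySynchronising := by
  refine ⟨fun x y => (S.ae_tendsto_dist_iff x y).1 ((h x y).mono fun ω hω => hω.tendsto_dist),
    fun x => ?_⟩
  have hx : ∀ᵐ ω ∂S.P, ∃ V : Set UnitAddCircle, IsOpen V ∧ x ∈ V ∧
      Tendsto (fun t => volume (S.φ t ω '' V)) S.tFilter (𝓝 0) := by
    filter_upwards [h x x] with ω ⟨V, hVo, hxV, _, hV⟩ using ⟨V, hVo, hxV, hV.tendsto_volume⟩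
  exact (measure_congr (eventuallyEq_univ.2 hx)).trans measure_univ

lemma ForwardInvariant.ae_jointlyContracts_of_mem (hinv : S.ForwardInvariant U) (hU : IsOpen U)
    (hnontriv : Uᶜ.Nontrivial)
    (hsync : ∀ x ∈ U, ∀ y ∈ U,
      ∀ᵐ ω ∂S.P, Tendsto (fun t => dist (S.φ t ω x) (S.φ t ω y)) S.tFilter (𝓝 0)) :
    ∀ᵐ ω ∂S.P, ∀ x ∈ U, ∀ y ∈ U, S.JointlyContracts ω x y := by
  obtain ⟨p, hp, q, hq, hpq⟩ := hnontriv
  have hrat : ∀ᵐ ω ∂S.P, ∀ a b : ℚ, circleProj a ∈ U → circleProj b ∈ U →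
      S.Contracts ω {circleProj a, circleProj b} := by
    simp only [ae_all_iff, contracts_pair_iff]
    exact fun a b ha hb => hsync _ ha _ hb
  filter_upwards [hinv, hrat] with ω hω hωrat x hx y hy using
    jointlyContracts_of_image_subset hU hω hp hq hpq hωrat hx hy

lemma ForwardInvariant.ae_jointlyContracts (hinv : S.ForwardInvariant U)
    (henter : ∀ x, ∀ᵐ ω ∂S.P, ∃ n : ℕ, S.φ n ω x ∈ U)
    (hcontr : ∀ᵐ ω ∂S.P, ∀ x ∈ U, ∀ y ∈ U, S.JointlyContracts ω x y) (x y : UnitAddCircle) :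
    ∀ᵐ ω ∂S.P, S.JointlyContracts ω x y := by
  have hstay : ∀ z, ∀ᵐ ω ∂S.P, ∀ n : ℕ, ∀ t ∈ S.T, n ≤ t → S.φ n ω z ∈ U → S.φ t ω z ∈ U :=
    fun z => ae_all_iff.2 fun n => hinv.ae_mem_of_le (S.natCast_mem_T n) z
  have hshift : ∀ᵐ ω ∂S.P, ∀ n : ℕ, ∀ x ∈ U, ∀ y ∈ U, S.JointlyContracts (S.θ n ω) x y :=
    ae_all_iff.2 fun n =>
      (S.θ_preserving n (S.natCast_mem_T n)).quasiMeasurePreserving.ae hcontr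
  filter_upwards [henter x, henter y, hstay x, hstay y, hshift] with
    ω ⟨i, hi⟩ ⟨j, hj⟩ hx hy hω
  have hN := S.natCast_mem_T (max i j)
  exact .of_θ hN (hω _ _ (hx i _ hN (Nat.cast_le.2 (le_max_left i j)) hi)
    _ (hy j _ hN (Nat.cast_le.2 (le_max_right i j)) hj))

end Synchronisation

end RDS

/-- if `U` is a non-empty open proper forward-invariant subset with no non-empty
closed forward-invariant set in its complement, then `φ` is stably synchronising iff all pairs
of points of `U` synchronise almost surely. -/
theorem stablySynchronising_iff_synchronisation_within_U
    {Ω : Type} [MeasurableSpace Ω] (S : RDS Ω) (U : Set UnitAddCircle)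
    (hUopen : IsOpen U) (hUne : U.Nonempty) (hUproper : U ≠ Set.univ)
    (hUinv : S.ForwardInvariant U)
    (hnoK : ¬ ∃ K : Set UnitAddCircle, K.Nonempty ∧ IsClosed K ∧ K ⊆ Uᶜ ∧
      S.ForwardInvariant K) :
    S.StablySynchronising ↔ ∀ x ∈ U, ∀ y ∈ U,
      S.P {ω | Tendsto (fun t => dist (S.φ t ω x) (S.φ t ω y)) S.tFilter (𝓝 0)} = 1 := by
  refine ⟨fun h x _ y _ => h.1 x y, fun h => ?_⟩
  have havoid : S.avoiding U = ∅ := by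
    by_contra hne
    exact hnoK ⟨_, nonempty_iff_ne_empty.2 hne, RDS.isClosed_avoiding hUopen,
      RDS.avoiding_subset_compl, hUinv.avoiding hUopen⟩
  have hinf : Uᶜ.Infinite := fun hfin =>
    hnoK ⟨Uᶜ, nonempty_compl.2 hUproper, hUopen.isClosed_compl, subset_rfl,
      hUinv.compl_of_finite hfin⟩
  have hcontr := hUinv.ae_jointlyContracts_of_mem hUopen hinf.nontrivial fun x hx y hy =>
    (S.ae_tendsto_dist_iff x y).2 (h x hx y hy)
  exact RDS.stablySynchronising_of_ae_jointlyContracts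
    (hUinv.ae_jointlyContracts (hUinv.ae_exists_mem hUopen havoid) hcontr)
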